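/- arXiv:1705.03096 — 9 statements merged into one kernel-verified Lean document; each statement's English description precedes it below -/
import Mathlib

section
/- For the cycle C_n on n ≥ 3 vertices, the 1/2-domination number satisfies γ_{1/2}(C_n) = ⌈n/6⌉. -/
/-!
On a cycle a vertex dominates at most three vertices, so `|N[S]| ≤ 3|S|` (`ncard_closedNbhd_le`),
and a half-dominating set has at least `n / 6` elements.

Conversely, put `m = ⌈n/6⌉`; then `3m ≤ n` for `n ≥ 3`, so the `m` vertices `3i + 1`, `i < m`, fit
without wrapping around the cycle and dominate the `3m ≥ n / 2` vertices `0, …, 3m - 1`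
(`exists_ncard_eq_le_closedNbhd`).
-/

open SimpleGraph

/-- The closed neighborhood `N[S]` of a set of vertices `S`: all vertices that
lie in `S` or are adjacent to a vertex of `S`. -/
def closedNbhd {V : Type*} (G : SimpleGraph V) (S : Set V) : Set V :=
  {v | v ∈ S ∨ ∃ u ∈ S, G.Adj u v}

/-- `S` is a `p`-dominating set of `G` if `|N[S]| ≥ p * |V|`. -/
def IsPDomSet {V : Type*} [Fintype V] (G : SimpleGraph V) (p : ℚ) (S : Set V) : Prop :=
  p * (Fintype.card V : ℚ) ≤ ((closedNbhd G S).ncard : ℚ)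

/-- The `p`-domination number: the minimum cardinality of a `p`-dominating set. -/
noncomputable def pDomNum {V : Type*} [Fintype V] (G : SimpleGraph V) (p : ℚ) : ℕ :=
  sInf {k | ∃ S : Set V, IsPDomSet G p S ∧ S.ncard = k}

/-- `S` is a dominating set of `G` if `N[S] = V`. -/
def IsDomSet {V : Type*} (G : SimpleGraph V) (S : Set V) : Prop :=
  closedNbhd G S = Set.univ

/-- The domination number: the minimum cardinality of a dominating set. -/
noncomputable def domNum {V : Type*} [Fintype V] (G : SimpleGraph V) : ℕ :=
  sInf {k | ∃ S : Set V, IsDomSet G S ∧ S.ncard = k}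

/-- The closed neighborhood is covered by `S` and its two translates `S - 1`, `S + 1`. -/
lemma ncard_closedNbhd_le (k : ℕ) (S : Set (Fin (k + 3))) :
    (closedNbhd (cycleGraph (k + 3)) S).ncard ≤ 3 * S.ncard := by
  have hsub : closedNbhd (cycleGraph (k + 3)) S ⊆
      S ∪ (fun u => u - 1) '' S ∪ (fun u => u + 1) '' S := by
    rintro v (hv | ⟨u, hu, huv⟩)
    · exact Or.inl (Or.inl hv)
    · rcases (cycleGraph_adj (n := k + 1)).1 huv with h | h
      · exact Or.inl (Or.inr ⟨u, hu, by simp [← h]⟩)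
      · exact Or.inr ⟨u, hu, by simp [← h]⟩
  have h1 := Set.ncard_le_ncard hsub (Set.toFinite _)
  have h2 := Set.ncard_union_le (S ∪ (fun u => u - 1) '' S) ((fun u => u + 1) '' S)
  have h3 := Set.ncard_union_le S ((fun u => u - 1) '' S)
  have h4 := Set.ncard_image_le (f := fun u : Fin (k + 3) => u - 1) (Set.toFinite S)
  have h5 := Set.ncard_image_le (f := fun u : Fin (k + 3) => u + 1) (Set.toFinite S)
  omega

/-- The `m` vertices `3i + 1` with `i < m` dominate the initial segment `0, …, 3m - 1`. -/
lemma exists_ncard_eq_le_closedNbhd (n m : ℕ) (h : 3 * m ≤ n) :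
    ∃ S : Set (Fin n), S.ncard = m ∧ 3 * m ≤ (closedNbhd (cycleGraph n) S).ncard := by
  let f : Fin m → Fin n := fun i => ⟨3 * i + 1, by omega⟩
  have hf : Function.Injective f := fun i j hij => by
    simp only [f, Fin.mk.injEq] at hij
    exact Fin.ext (by omega)
  refine ⟨Set.range f, by simp [Set.ncard_range_of_injective hf], ?_⟩
  have hsub : Set.range (Fin.castLE h) ⊆ closedNbhd (cycleGraph n) (Set.range f) := by
    rintro _ ⟨v, rfl⟩
    let i : Fin m := ⟨v / 3, by omega⟩
    by_cases hv : v.val % 3 = 1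
    · exact Or.inl ⟨i, Fin.ext (by simp only [f, i, Fin.val_castLE]; omega)⟩
    · refine Or.inr ⟨f i, ⟨i, rfl⟩, pathGraph_le_cycleGraph ?_⟩
      rw [pathGraph_adj]
      simp only [f, i, Fin.val_castLE]
      omega
  have hcard := Set.ncard_le_ncard hsub (Set.toFinite _)
  rwa [Set.ncard_range_of_injective (Fin.castLE_injective h), Nat.card_fin] at hcard

/-- For the cycle `C_n` on `n ≥ 3` vertices, `γ_{1/2}(C_n) = ⌈n/6⌉`. -/
theorem halfDom_cycle (n : ℕ) (hn : 3 ≤ n) :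
    pDomNum (cycleGraph n) (1/2) = ⌈(n : ℚ) / 6⌉₊ := by
  unfold pDomNum
  apply le_antisymm
  · set m := ⌈(n : ℚ) / 6⌉₊ with hm
    have hlo : (n : ℚ) / 6 ≤ m := Nat.le_ceil _
    have hhi : (m : ℚ) < n / 6 + 1 := Nat.ceil_lt_add_one (by positivity)
    have hhi' : 6 * m < n + 6 := by
      have : (6 : ℚ) * m < n + 6 := by linarith
      exact_mod_cast this
    obtain ⟨S, hS, hdom⟩ := exists_ncard_eq_le_closedNbhd n m (by omega)
    refine Nat.sInf_le ⟨S, ?_, hS⟩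
    have hdom' : (3 : ℚ) * m ≤ (closedNbhd (cycleGraph n) S).ncard := by exact_mod_cast hdom
    rw [IsPDomSet, Fintype.card_fin]
    linarith
  · -- The infimum of an empty set of naturals is `0`, so nonemptiness is needed here;
    -- the whole vertex set is half-dominating.
    refine le_csInf ⟨_, Set.univ, ?_, rfl⟩ ?_
    · have huniv : closedNbhd (cycleGraph n) Set.univ = Set.univ :=
        Set.eq_univ_of_forall fun v => Or.inl (Set.mem_univ v)
      rw [IsPDomSet, huniv, Set.ncard_univ, Nat.card_fin, Fintype.card_fin]
      have : (0 : ℚ) ≤ n := by positivity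
      linarith
    · rintro _ ⟨S, hS, rfl⟩
      obtain ⟨k, rfl⟩ := Nat.exists_eq_add_of_le' hn
      have hle : ((closedNbhd (cycleGraph (k + 3)) S).ncard : ℚ) ≤ 3 * S.ncard := by
        exact_mod_cast ncard_closedNbhd_le k S
      rw [IsPDomSet, Fintype.card_fin] at hS
      exact Nat.ceil_le.2 (by linarith)
end

section
/- For the path P_n on n ≥ 1 vertices, the 1/2-domination number satisfies γ_{1/2}(P_n) = ⌈n/6⌉. -/
/-!
On a path a vertex dominates at most three vertices, so a set `S` with `2|N[S]| ≥ n` has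
`6|S| ≥ n` (`ncard_closedNbhd_pathGraph_le`). Conversely, `k` vertices placed at the centers of
the first `k` blocks of three dominate the first `min (3k) n` vertices
(`exists_min_le_ncard_closedNbhd`); for `k = ⌈n/6⌉` this is at least half of the path.
-/

open SimpleGraph

/-- On a path every vertex has at most two neighbors, so `|N[S]| ≤ 3|S|`. -/
lemma ncard_closedNbhd_pathGraph_le (n : ℕ) (S : Set (Fin n)) :
    (closedNbhd (pathGraph n) S).ncard ≤ 3 * S.ncard := by
  have hsub : Fin.val '' closedNbhd (pathGraph n) S ⊆
      (Fin.val '' S ∪ (fun v : Fin n => v.val + 1) '' S) ∪ (fun v : Fin n => v.val - 1) '' S := by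
    rintro _ ⟨v, hv | ⟨u, hu, hadj⟩, rfl⟩
    · exact Or.inl (Or.inl ⟨v, hv, rfl⟩)
    · rcases pathGraph_adj.mp hadj with h | h
      · exact Or.inl (Or.inr ⟨u, hu, h⟩)
      · exact Or.inr ⟨u, hu, by simp only; omega⟩
  have h0 := Set.ncard_le_ncard hsub (Set.toFinite _)
  rw [Set.ncard_image_of_injective _ Fin.val_injective] at h0
  have h1 := Set.ncard_union_le (Fin.val '' S ∪ (fun v : Fin n => v.val + 1) '' S)
    ((fun v : Fin n => v.val - 1) '' S)
  have h2 := Set.ncard_union_le (Fin.val '' S) ((fun v : Fin n => v.val + 1) '' S)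
  have h3 := Set.ncard_image_le (f := Fin.val) S.toFinite
  have h4 := Set.ncard_image_le (f := fun v : Fin n => v.val + 1) S.toFinite
  have h5 := Set.ncard_image_le (f := fun v : Fin n => v.val - 1) S.toFinite
  omega

/-- At most `k` vertices suffice to dominate the first `min (3k) n` vertices of the path: take
the middle vertex of each of the first `k` blocks of three, truncated to the last vertex. -/
lemma exists_min_le_ncard_closedNbhd (n k : ℕ) (hn : 1 ≤ n) :
    ∃ S : Set (Fin n), S.ncard ≤ k ∧ min (3 * k) n ≤ (closedNbhd (pathGraph n) S).ncard := by
  let f : ℕ → Fin n := fun i => ⟨min (3 * i + 1) (n - 1), by omega⟩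
  refine ⟨f '' Set.Iio k, ?_, ?_⟩
  · simpa using Set.ncard_image_le (f := f) (Set.finite_Iio k)
  · have hsub : Set.Iio (min (3 * k) n) ⊆
        Fin.val '' closedNbhd (pathGraph n) (f '' Set.Iio k) := by
      intro v hv
      have hv' : v < 3 * k ∧ v < n := by simpa using hv
      refine ⟨⟨v, hv'.2⟩, ?_, rfl⟩
      have hmem : f (v / 3) ∈ f '' Set.Iio k :=
        ⟨v / 3, by simp only [Set.mem_Iio]; omega, rfl⟩
      by_cases h : f (v / 3) = ⟨v, hv'.2⟩
      · exact Or.inl (h ▸ hmem)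
      · refine Or.inr ⟨_, hmem, pathGraph_adj.mpr ?_⟩
        simp only [f, Fin.mk.injEq] at h ⊢
        omega
    have h := Set.ncard_le_ncard hsub (Set.toFinite _)
    rw [Set.ncard_image_of_injective _ Fin.val_injective] at h
    simpa using h

lemma isPDomSet_half_pathGraph_iff (n : ℕ) (S : Set (Fin n)) :
    IsPDomSet (pathGraph n) (1/2) S ↔ n ≤ 2 * (closedNbhd (pathGraph n) S).ncard := by
  rw [IsPDomSet, Fintype.card_fin, ← Nat.cast_le (α := ℚ)]
  push_cast
  constructor <;> intro h <;> linarith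

/-- For the path `P_n` on `n ≥ 1` vertices, `γ_{1/2}(P_n) = ⌈n/6⌉`. -/
theorem halfDom_path (n : ℕ) (hn : 1 ≤ n) :
    pDomNum (pathGraph n) (1/2) = ⌈(n : ℚ) / 6⌉₊ := by
  have hlower : ∀ S : Set (Fin n), IsPDomSet (pathGraph n) (1/2) S →
      ⌈(n : ℚ) / 6⌉₊ ≤ S.ncard := by
    intro S hS
    rw [isPDomSet_half_pathGraph_iff] at hS
    have h := ncard_closedNbhd_pathGraph_le n S
    have h6 : (n : ℚ) ≤ 6 * S.ncard := by exact_mod_cast (by omega : n ≤ 6 * S.ncard)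
    rw [Nat.ceil_le]
    linarith
  obtain ⟨S, hcard, hdom⟩ := exists_min_le_ncard_closedNbhd n ⌈(n : ℚ) / 6⌉₊ hn
  have hk : n ≤ 6 * ⌈(n : ℚ) / 6⌉₊ := by
    have h := Nat.le_ceil ((n : ℚ) / 6)
    have h' : (n : ℚ) ≤ 6 * ⌈(n : ℚ) / 6⌉₊ := by linarith
    exact_mod_cast h'
  have hS : IsPDomSet (pathGraph n) (1/2) S :=
    (isPDomSet_half_pathGraph_iff n S).mpr (by omega)
  have hupper : pDomNum (pathGraph n) (1/2) ≤ S.ncard := Nat.sInf_le ⟨S, hS, rfl⟩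
  refine le_antisymm (hupper.trans hcard) ?_
  refine le_csInf ⟨_, S, hS, rfl⟩ ?_
  rintro _ ⟨T, hT, rfl⟩
  exact hlower T hT
end

section
/- For the m-by-n grid graph P_m □ P_n with 3 ≤ m ≤ n, the 1/2-domination number satisfies γ_{1/2}(P_m □ P_n) = ⌈mn/10⌉. -/
/-!
A closed neighbourhood in a grid has at most five vertices, so a set covering half of the
`m * n` vertices has at least `m * n / 10` elements (`pDom_card_ge`).

For the upper bound, the vertices `(a, b)` with `a + 2 * b ≡ c` modulo `5` have pairwise disjoint
closed neighbourhoods, and these have exactly five elements when `(a, b)` is off the border. By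
pigeonhole some residue class contains at least a fifth of the `(m - 2) * (n - 2)` interior
vertices, which suffices as soon as `m * n ≤ 2 * (m - 2) * (n - 2)` (`halfCover_of_large`). What
remains is `m = 3`, `m = 4`, and finitely many grids with `m = 5, 6`. For `m = 3` and `m = 4` there
are optimal `3 × 10` and `4 × 5` blocks, which are placed side by side (`HalfCover.append`) next to
one of finitely many smaller blocks; the finitely many grids are handled by explicit sets.
-/

open SimpleGraph

/-! ### Closed neighbourhoods in coordinates -/

/-- The closed neighbourhood of `u` in the quarter-plane grid `ℕ × ℕ`. On the border the truncated
predecessor of `0` is `0`, which only repeats `u` itself. -/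
def cross (u : ℕ × ℕ) : Finset (ℕ × ℕ) :=
  {(u.1, u.2), (u.1 + 1, u.2), (u.1 - 1, u.2), (u.1, u.2 + 1), (u.1, u.2 - 1)}

/-- The vertices of the `m × n` grid, as a subset of `ℕ × ℕ`. -/
def box (m n : ℕ) : Finset (ℕ × ℕ) := Finset.range m ×ˢ Finset.range n

/-- Some set of at most `k` vertices of the `m × n` grid covers at least half of the grid. -/
def HalfCover (m n k : ℕ) : Prop :=
  ∃ S : Finset (ℕ × ℕ), S ⊆ box m n ∧ S.card ≤ k ∧ m * n ≤ 2 * (S.biUnion cross ∩ box m n).card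

lemma mem_cross (u v : ℕ × ℕ) : v ∈ cross u ↔
    v = u ∨ ((u.1 + 1 = v.1 ∨ v.1 + 1 = u.1) ∧ u.2 = v.2) ∨
      ((u.2 + 1 = v.2 ∨ v.2 + 1 = u.2) ∧ u.1 = v.1) := by
  obtain ⟨a, b⟩ := u
  obtain ⟨c, d⟩ := v
  simp only [cross, Finset.mem_insert, Finset.mem_singleton, Prod.mk.injEq]
  omega

lemma mem_box {m n : ℕ} {u : ℕ × ℕ} : u ∈ box m n ↔ u.1 < m ∧ u.2 < n := by
  simp [box]

lemma card_cross_le (u : ℕ × ℕ) : (cross u).card ≤ 5 := Finset.card_le_five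

lemma card_cross_eq {u : ℕ × ℕ} (h1 : 1 ≤ u.1) (h2 : 1 ≤ u.2) : (cross u).card = 5 := by
  obtain ⟨a, b⟩ := u
  obtain ⟨a, rfl⟩ := Nat.exists_eq_add_of_le h1
  obtain ⟨b, rfl⟩ := Nat.exists_eq_add_of_le h2
  unfold cross
  repeat rw [Finset.card_insert_of_notMem (by simp; try omega)]
  simp

/-! ### From the quarter plane to the graph -/

/-- The coordinates in `ℕ × ℕ` of a vertex of the `m × n` grid graph. -/
def coords (m n : ℕ) (u : Fin m × Fin n) : ℕ × ℕ := (u.1, u.2)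

lemma coords_injective (m n : ℕ) : Function.Injective (coords m n) := by
  rintro ⟨a, b⟩ ⟨c, d⟩ h
  simpa [coords, Fin.ext_iff] using h

lemma coords_mem_cross {m n : ℕ} (u v : Fin m × Fin n) :
    coords m n v ∈ cross (coords m n u) ↔
      v = u ∨ ((pathGraph m).boxProd (pathGraph n)).Adj u v := by
  rw [mem_cross, (coords_injective m n).eq_iff, boxProd_adj, pathGraph_adj, pathGraph_adj,
    Fin.ext_iff, Fin.ext_iff]
  rfl

lemma image_closedNbhd {m n : ℕ} (S : Set (Fin m × Fin n)) (T : Finset (ℕ × ℕ))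
    (hT : coords m n '' S = T) :
    coords m n '' closedNbhd ((pathGraph m).boxProd (pathGraph n)) S
      = ↑(T.biUnion cross ∩ box m n) := by
  ext w
  simp only [Finset.coe_inter, Finset.coe_biUnion, Set.mem_inter_iff, Set.mem_iUnion,
    Finset.mem_coe, mem_box, exists_prop]
  have hT' : ∀ u, u ∈ T ↔ ∃ s ∈ S, coords m n s = u := by
    intro u
    rw [← Finset.mem_coe, ← hT]
    rfl
  constructor
  · rintro ⟨v, hv, rfl⟩
    refine ⟨?_, v.1.2, v.2.2⟩
    rcases hv with hv | ⟨u, hu, huv⟩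
    · exact ⟨_, (hT' _).2 ⟨v, hv, rfl⟩, (coords_mem_cross v v).2 (Or.inl rfl)⟩
    · exact ⟨_, (hT' _).2 ⟨u, hu, rfl⟩, (coords_mem_cross u v).2 (Or.inr huv)⟩
  · rintro ⟨⟨u, hu, hw⟩, h1, h2⟩
    obtain ⟨s, hs, rfl⟩ := (hT' u).1 hu
    refine ⟨(⟨w.1, h1⟩, ⟨w.2, h2⟩), ?_, rfl⟩
    rcases (coords_mem_cross s (⟨w.1, h1⟩, ⟨w.2, h2⟩)).1 hw with h | h
    · exact Or.inl (h ▸ hs)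
    · exact Or.inr ⟨s, hs, h⟩

lemma isPDomSet_half_iff {m n : ℕ} (S : Set (Fin m × Fin n)) (T : Finset (ℕ × ℕ))
    (hT : coords m n '' S = T) :
    IsPDomSet ((pathGraph m).boxProd (pathGraph n)) (1/2) S ↔
      m * n ≤ 2 * (T.biUnion cross ∩ box m n).card := by
  have h := image_closedNbhd S T hT
  have hc := congrArg Set.ncard h
  rw [Set.ncard_image_of_injective _ (coords_injective m n), Set.ncard_coe_finset] at hc
  unfold IsPDomSet
  rw [hc, Fintype.card_prod, Fintype.card_fin, Fintype.card_fin,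
    ← Nat.cast_le (α := ℚ) (m := m * n)]
  push_cast
  constructor <;> intro h <;> linarith

lemma ncard_eq_of_image {m n : ℕ} (S : Set (Fin m × Fin n)) (T : Finset (ℕ × ℕ))
    (hT : coords m n '' S = T) : S.ncard = T.card := by
  rw [← Set.ncard_image_of_injective S (coords_injective m n), hT, Set.ncard_coe_finset]

lemma pDom_card_ge {m n : ℕ} (S : Set (Fin m × Fin n))
    (hS : IsPDomSet ((pathGraph m).boxProd (pathGraph n)) (1/2) S) :
    m * n ≤ 10 * S.ncard := by
  have hT : coords m n '' S = (S.toFinite.image (coords m n)).toFinset := by simp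
  have h1 := (isPDomSet_half_iff S _ hT).1 hS
  rw [ncard_eq_of_image S _ hT]
  have h2 := Finset.card_le_card (Finset.inter_subset_left
    (s₁ := (S.toFinite.image (coords m n)).toFinset.biUnion cross) (s₂ := box m n))
  have h3 := Finset.card_biUnion_le_card_mul (S.toFinite.image (coords m n)).toFinset cross 5
    fun u _ => card_cross_le u
  omega

lemma exists_pDomSet_of_halfCover {m n k : ℕ} (h : HalfCover m n k) :
    ∃ S : Set (Fin m × Fin n),
      IsPDomSet ((pathGraph m).boxProd (pathGraph n)) (1/2) S ∧ S.ncard ≤ k := by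
  obtain ⟨T, hT, hk, hc⟩ := h
  have hS : coords m n '' (coords m n ⁻¹' (T : Set (ℕ × ℕ))) = T := by
    rw [Set.image_preimage_eq_iff]
    intro u hu
    have := mem_box.1 (hT hu)
    exact ⟨(⟨u.1, this.1⟩, ⟨u.2, this.2⟩), rfl⟩
  exact ⟨_, (isPDomSet_half_iff _ T hS).2 hc, (ncard_eq_of_image _ T hS).trans_le hk⟩

/-! ### Placing blocks side by side -/

lemma HalfCover.append {m n n' k k' : ℕ} (h : HalfCover m n k) (h' : HalfCover m n' k') :
    HalfCover m (n + n') (k + k') := by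
  obtain ⟨S, hS, hk, hc⟩ := h
  obtain ⟨T, hT, hk', hc'⟩ := h'
  let shift : ℕ × ℕ → ℕ × ℕ := fun u => (u.1, u.2 + n)
  have hinj : Function.Injective shift := by
    rintro ⟨a, b⟩ ⟨c, d⟩ h
    simpa [shift] using h
  refine ⟨S ∪ T.image shift, ?_, ?_, ?_⟩
  · intro u hu
    rw [mem_box]
    rcases Finset.mem_union.1 hu with hu | hu
    · have := mem_box.1 (hS hu)
      omega
    · obtain ⟨t, ht, rfl⟩ := Finset.mem_image.1 hu
      have := mem_box.1 (hT ht)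
      simp only [shift]
      omega
  · have h1 := Finset.card_union_le S (T.image shift)
    have h2 := Finset.card_image_le (s := T) (f := shift)
    omega
  · have hsub : (S.biUnion cross ∩ box m n) ∪ (T.biUnion cross ∩ box m n').image shift ⊆
        (S ∪ T.image shift).biUnion cross ∩ box m (n + n') := by
      intro w hw
      rw [Finset.mem_inter, Finset.mem_biUnion, mem_box]
      rcases Finset.mem_union.1 hw with hw | hw
      · obtain ⟨hw, hb⟩ := Finset.mem_inter.1 hw
        obtain ⟨s, hs, hws⟩ := Finset.mem_biUnion.1 hw
        have := mem_box.1 hb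
        exact ⟨⟨s, Finset.mem_union_left _ hs, hws⟩, by omega⟩
      · obtain ⟨v, hv, rfl⟩ := Finset.mem_image.1 hw
        obtain ⟨hv, hb⟩ := Finset.mem_inter.1 hv
        obtain ⟨t, ht, hvt⟩ := Finset.mem_biUnion.1 hv
        have := mem_box.1 hb
        refine ⟨⟨shift t, Finset.mem_union_right _ (Finset.mem_image_of_mem _ ht), ?_⟩,
          by simp only [shift]; omega⟩
        rw [mem_cross, Prod.ext_iff] at hvt ⊢
        simp only [shift]
        omega
    have hdisj : Disjoint (S.biUnion cross ∩ box m n)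
        ((T.biUnion cross ∩ box m n').image shift) := by
      rw [Finset.disjoint_left]
      intro w hw hw'
      obtain ⟨v, -, rfl⟩ := Finset.mem_image.1 hw'
      have := (mem_box.1 (Finset.mem_inter.1 hw).2).2
      simp only [shift] at this
      omega
    have h1 := Finset.card_le_card hsub
    rw [Finset.card_union_of_disjoint hdisj, Finset.card_image_of_injective _ hinj] at h1
    rw [mul_add]
    omega

lemma HalfCover.repeat {m n k r l : ℕ} (h : HalfCover m n k) (h' : HalfCover m r l) (q : ℕ) :
    HalfCover m (n * q + r) (k * q + l) := by
  induction q with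
  | zero => simpa using h'
  | succ q ih =>
    have := h.append ih
    rwa [show n + (n * q + r) = n * (q + 1) + r by ring,
      show k + (k * q + l) = k * (q + 1) + l by ring] at this

/-! ### Large grids -/

/-- Two grid points in the same residue class of `a + 2 * b` modulo `5` have disjoint closed
neighbourhoods, since the five displacements of a closed neighbourhood take distinct values modulo `5`. -/
lemma disjoint_cross {u v : ℕ × ℕ}
    (h : (u.1 + 2 * u.2) % 5 = (v.1 + 2 * v.2) % 5) (hne : u ≠ v) :
    Disjoint (cross u) (cross v) := by
  rw [Finset.disjoint_left]
  intro w hw hw'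
  apply hne
  rw [mem_cross, Prod.ext_iff] at hw hw'
  rw [Prod.ext_iff]
  omega

lemma halfCover_of_large {m n k : ℕ} (hm : 2 ≤ m) (hn : 2 ≤ n)
    (h : m * n ≤ 2 * ((m - 2) * (n - 2))) (hk : m * n ≤ 10 * k) (hk' : 10 * k < m * n + 10) :
    HalfCover m n k := by
  set I : Finset (ℕ × ℕ) := Finset.Ico 1 (m - 1) ×ˢ Finset.Ico 1 (n - 1) with hI
  have hIcard : I.card = (m - 2) * (n - 2) := by
    rw [hI, Finset.card_product, Nat.card_Ico, Nat.card_Ico, Nat.sub_sub, Nat.sub_sub]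
  have hImem : ∀ u ∈ I, (1 ≤ u.1 ∧ u.1 + 1 < m) ∧ 1 ≤ u.2 ∧ u.2 + 1 < n := by
    intro u hu
    simp only [hI, Finset.mem_product, Finset.mem_Ico] at hu
    omega
  obtain ⟨c, -, hc⟩ : ∃ c ∈ Finset.range 5,
      k - 1 < (I.filter fun u => (u.1 + 2 * u.2) % 5 = c).card := by
    apply Finset.exists_lt_card_fiber_of_mul_lt_card_of_maps_to
    · intro u _
      exact Finset.mem_coe.2 (Finset.mem_range.2 (Nat.mod_lt _ (by norm_num)))
    · have : 0 < m * n := by positivity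
      rw [Finset.card_range, hIcard]
      omega
  obtain ⟨S, hS, hScard⟩ := Finset.exists_subset_card_eq
    (show k ≤ (I.filter fun u => (u.1 + 2 * u.2) % 5 = c).card by omega)
  have hSI : ∀ u ∈ S, ((1 ≤ u.1 ∧ u.1 + 1 < m) ∧ 1 ≤ u.2 ∧ u.2 + 1 < n) ∧
      (u.1 + 2 * u.2) % 5 = c := by
    intro u hu
    obtain ⟨h1, h2⟩ := Finset.mem_filter.1 (hS hu)
    exact ⟨hImem u h1, h2⟩
  refine ⟨S, ?_, hScard.le, ?_⟩
  · intro u hu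
    have := hSI u hu
    rw [mem_box]
    omega
  · have hsub : S.biUnion cross ⊆ box m n := by
      intro w hw
      obtain ⟨u, hu, hwu⟩ := Finset.mem_biUnion.1 hw
      have := hSI u hu
      rw [mem_cross, Prod.ext_iff] at hwu
      rw [mem_box]
      omega
    have hcard : (S.biUnion cross).card = S.card * 5 := by
      rw [Finset.card_biUnion, Finset.sum_const_nat]
      · intro u hu
        have := hSI u hu
        exact card_cross_eq this.1.1.1 this.1.2.1
      · intro u hu v hv hne
        have h1 := hSI u hu
        have h2 := hSI v hv
        exact disjoint_cross (h1.2.trans h2.2.symm) hne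
    rw [Finset.inter_eq_left.2 hsub, hcard]
    omega

/-! ### Narrow grids -/

lemma halfCover_three (n : ℕ) : HalfCover 3 n ((3 * n + 9) / 10) := by
  have hblock : HalfCover 3 10 3 := ⟨{(1, 1), (1, 4), (1, 7)}, by decide +kernel⟩
  have hrest : ∀ r < 10, HalfCover 3 r ((3 * r + 9) / 10) := by
    intro r hr
    interval_cases r
    · exact ⟨∅, by decide +kernel⟩
    · exact ⟨{(0, 0)}, by decide +kernel⟩
    · exact ⟨{(0, 0)}, by decide +kernel⟩
    · exact ⟨{(1, 1)}, by decide +kernel⟩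
    · exact ⟨{(1, 1), (1, 2)}, by decide +kernel⟩
    · exact ⟨{(1, 1), (1, 2)}, by decide +kernel⟩
    · exact ⟨{(1, 1), (1, 3)}, by decide +kernel⟩
    · exact ⟨{(1, 1), (1, 2), (1, 3)}, by decide +kernel⟩
    · exact ⟨{(1, 1), (1, 2), (1, 4)}, by decide +kernel⟩
    · exact ⟨{(1, 1), (1, 3), (1, 6)}, by decide +kernel⟩
  have := hblock.repeat (hrest (n % 10) (Nat.mod_lt _ (by norm_num))) (n / 10)
  rwa [Nat.div_add_mod, show 3 * (n / 10) + (3 * (n % 10) + 9) / 10 = (3 * n + 9) / 10 by omega]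
    at this

lemma halfCover_four (n : ℕ) : HalfCover 4 n ((4 * n + 9) / 10) := by
  have hblock : HalfCover 4 5 2 := ⟨{(1, 1), (2, 3)}, by decide +kernel⟩
  have hrest : ∀ r < 5, HalfCover 4 r ((4 * r + 9) / 10) := by
    intro r hr
    interval_cases r
    · exact ⟨∅, by decide +kernel⟩
    · exact ⟨{(0, 0)}, by decide +kernel⟩
    · exact ⟨{(1, 0)}, by decide +kernel⟩
    · exact ⟨{(1, 1), (2, 1)}, by decide +kernel⟩
    · exact ⟨{(1, 1), (1, 2)}, by decide +kernel⟩
  have := hblock.repeat (hrest (n % 5) (Nat.mod_lt _ (by norm_num))) (n / 5)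
  rwa [Nat.div_add_mod, show 2 * (n / 5) + (4 * (n % 5) + 9) / 10 = (4 * n + 9) / 10 by omega]
    at this

lemma halfCover_five {n : ℕ} (hn : 5 ≤ n) : HalfCover 5 n ((5 * n + 9) / 10) := by
  rcases Nat.lt_or_ge n 12 with h | h
  · interval_cases n
    · exact ⟨{(1, 1), (1, 2), (3, 3)}, by decide +kernel⟩
    · exact ⟨{(1, 1), (1, 4), (3, 2)}, by decide +kernel⟩
    · exact ⟨{(1, 1), (1, 2), (1, 5), (3, 3)}, by decide +kernel⟩
    · exact ⟨{(1, 1), (1, 4), (2, 6), (3, 2)}, by decide +kernel⟩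
    · exact ⟨{(1, 1), (1, 2), (1, 5), (2, 7), (3, 3)}, by decide +kernel⟩
    · exact ⟨{(1, 1), (1, 4), (1, 7), (3, 2), (3, 5)}, by decide +kernel⟩
    · exact ⟨{(1, 1), (1, 2), (1, 5), (1, 8), (3, 3), (3, 6)}, by decide +kernel⟩
  · apply halfCover_of_large <;> omega

lemma halfCover_six {n : ℕ} (hn : 6 ≤ n) : HalfCover 6 n ((6 * n + 9) / 10) := by
  rcases Nat.lt_or_ge n 8 with h | h
  · interval_cases n
    · exact ⟨{(1, 1), (1, 2), (2, 4), (4, 1)}, by decide +kernel⟩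
    · exact ⟨{(1, 1), (1, 2), (1, 3), (2, 5), (4, 1)}, by decide +kernel⟩
  · apply halfCover_of_large <;> omega

lemma halfCover_grid {m n : ℕ} (hm : 3 ≤ m) (hmn : m ≤ n) :
    HalfCover m n ((m * n + 9) / 10) := by
  rcases Nat.lt_or_ge m 7 with h | h
  · interval_cases m
    · exact halfCover_three n
    · exact halfCover_four n
    · exact halfCover_five hmn
    · exact halfCover_six hmn
  · apply halfCover_of_large (by omega) (by omega) _ (by omega) (by omega)
    -- The inequality says `(m - 4) * (n - 4) ≥ 8`.
    obtain ⟨a, rfl⟩ := Nat.exists_eq_add_of_le h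
    obtain ⟨b, rfl⟩ := Nat.exists_eq_add_of_le (h.trans hmn)
    rw [show 7 + a - 2 = 5 + a by omega, show 7 + b - 2 = 5 + b by omega]
    nlinarith [Nat.zero_le (a * b)]

/-- For the `m`-by-`n` grid graph `P_m □ P_n` with `3 ≤ m ≤ n`,
`γ_{1/2}(P_m □ P_n) = ⌈mn/10⌉`. -/
theorem halfDom_grid (m n : ℕ) (hm : 3 ≤ m) (hmn : m ≤ n) :
    pDomNum ((pathGraph m).boxProd (pathGraph n)) (1/2)
      = ⌈((m : ℚ) * n) / 10⌉₊ := by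
  have hle : ∀ k : ℕ, ⌈((m : ℚ) * n) / 10⌉₊ ≤ k ↔ m * n ≤ 10 * k := by
    intro k
    rw [Nat.ceil_le, div_le_iff₀ (by norm_num), mul_comm (k : ℚ)]
    exact_mod_cast Iff.rfl
  obtain ⟨S, hS, hcard⟩ := exists_pDomSet_of_halfCover (halfCover_grid hm hmn)
  apply le_antisymm
  · have hS_le : pDomNum ((pathGraph m).boxProd (pathGraph n)) (1/2) ≤ S.ncard :=
      Nat.sInf_le ⟨S, hS, rfl⟩
    have := (hle _).1 le_rfl
    omega
  · refine le_csInf ⟨_, S, hS, rfl⟩ ?_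
    rintro _ ⟨T, hT, rfl⟩
    exact (hle _).2 (pDom_card_ge T hT)
end

section
/- For the cylinder graph C_m □ C_n with 3 ≤ m ≤ n, the 1/2-domination number satisfies γ_{1/2}(C_m □ C_n) = ⌈mn/10⌉. -/
/-!
The torus `C_m □ C_n` is 4-regular, so a set `S` dominates at most `5 |S|` vertices; hence a
`1/2`-dominating set has at least `mn / 10` elements (`card_closedNbhd_le`).

Conversely, vertices at pairwise distance at least `3` have disjoint closed neighborhoods, so a
`3`-separated family of `⌈mn/10⌉` vertices is `1/2`-dominating (`card_closedNbhd_eq`). A density of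
`1/10` is far from the maximum `1/5` of a perfect code, which leaves room for a simple construction:
use every second row, and in such a row every third vertex, shifting consecutive rows against each
other. This gives `⌊m/2⌋ * ⌊n/3⌋` vertices (`separated_grid`), or `⌊m/3⌋ * ⌊n/2⌋` with the roles
of the two cycles exchanged. One of the two numbers is at least `mn / 10` for all `3 ≤ m ≤ n` except
`m = n = 5`, where three vertices are written down explicitly (`separated_ceil`).
-/

open SimpleGraph

section Regular

variable {V : Type*} [Fintype V] (G : SimpleGraph V)

open scoped Classical in
lemma closedNbhd_eq_biUnion (S : Finset V) :
    closedNbhd G (S : Set V) = (S.biUnion fun v => insert v (G.neighborFinset v) : Finset V) := by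
  ext w
  simp only [closedNbhd, Finset.mem_coe, Set.mem_ofPred_eq, Finset.mem_biUnion,
    Finset.mem_insert, mem_neighborFinset]
  constructor
  · rintro (h | ⟨u, hu, h⟩)
    · exact ⟨w, h, Or.inl rfl⟩
    · exact ⟨u, hu, Or.inr h⟩
  · rintro ⟨u, hu, rfl | h⟩
    · exact Or.inl hu
    · exact Or.inr ⟨u, hu, h⟩

open scoped Classical in
lemma card_closedNbhd_le {d : ℕ} (hd : ∀ v [Fintype (G.neighborSet v)], G.degree v = d) (S : Finset V) :
    (closedNbhd G (S : Set V)).ncard ≤ S.card * (d + 1) := by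
  rw [closedNbhd_eq_biUnion, Set.ncard_coe_finset]
  refine Finset.card_biUnion_le_card_mul _ _ _ fun v _ => ?_
  rw [Finset.card_insert_of_notMem (by simp), card_neighborFinset_eq_degree, hd]

open scoped Classical in
lemma card_closedNbhd_eq {d : ℕ} (hd : ∀ v [Fintype (G.neighborSet v)], G.degree v = d) (S : Finset V)
    (hS : ∀ p ∈ S, ∀ q ∈ S, ∀ w, (w = p ∨ G.Adj p w) → (w = q ∨ G.Adj q w) → p = q) :
    (closedNbhd G (S : Set V)).ncard = S.card * (d + 1) := by
  rw [closedNbhd_eq_biUnion, Set.ncard_coe_finset, Finset.card_biUnion]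
  · rw [Finset.sum_const_nat]
    intro v _
    rw [Finset.card_insert_of_notMem (by simp), card_neighborFinset_eq_degree, hd]
  · intro p hp q hq hpq
    refine Finset.disjoint_left.mpr fun w h1 h2 => hpq ?_
    simp only [Finset.mem_insert, mem_neighborFinset] at h1 h2
    exact hS p hp q hq w h1 h2

end Regular

/-- The distance of `x, y < a` on the cycle of length `a`; the sum of the two truncated differences
is `|x - y|`. -/
def cycDist (a x y : ℕ) : ℕ := min ((x - y) + (y - x)) (a - ((x - y) + (y - x)))

lemma cycDist_le_one_of_adj {a : ℕ} {u v : Fin a} (h : (cycleGraph a).Adj u v) :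
    cycDist a u v ≤ 1 := by
  rw [cycleGraph_adj'] at h
  have hu := u.2
  have hv := v.2
  unfold cycDist
  rcases le_total u v with huv | huv
  all_goals
    rcases eq_or_lt_of_le huv with rfl | hlt
    · omega
    · rw [Fin.coe_sub_iff_lt.mpr hlt, Fin.coe_sub_iff_le.mpr huv] at h
      rw [Fin.lt_def] at hlt
      omega

/-- `f` is a family of vertices of `C_a □ C_b` at pairwise distance at least `3`. -/
def Separated (a b : ℕ) {ι : Type*} (f : ι → Fin a × Fin b) : Prop :=
  ∀ i j, i ≠ j → 3 ≤ cycDist a (f i).1 (f j).1 + cycDist b (f i).2 (f j).2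

lemma cycDist_triangle_left {a x y z : ℕ} (hx : x < a) (hy : y < a) (hz : z < a) :
    cycDist a x y ≤ cycDist a x z + cycDist a y z := by
  unfold cycDist; omega

lemma cycDist_self (a x : ℕ) : cycDist a x x = 0 := by simp [cycDist]

lemma closedNbr_dist_le {a b : ℕ} {p w : Fin a × Fin b}
    (h : w = p ∨ ((cycleGraph a).boxProd (cycleGraph b)).Adj p w) :
    cycDist a p.1 w.1 + cycDist b p.2 w.2 ≤ 1 := by
  rcases h with rfl | h
  · simp [cycDist_self]
  · rw [boxProd_adj] at h
    rcases h with ⟨h, e⟩ | ⟨h, e⟩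
    · rw [e, cycDist_self]; exact cycDist_le_one_of_adj h
    · rw [e, cycDist_self, zero_add]; exact cycDist_le_one_of_adj h

lemma torus_degree {a b : ℕ} (ha : 3 ≤ a) (hb : 3 ≤ b) (v : Fin a × Fin b)
    [Fintype (((cycleGraph a).boxProd (cycleGraph b)).neighborSet v)] :
    ((cycleGraph a).boxProd (cycleGraph b)).degree v = 4 := by
  obtain ⟨a, rfl⟩ := Nat.exists_eq_add_of_le' ha
  obtain ⟨b, rfl⟩ := Nat.exists_eq_add_of_le' hb
  have h1 := cycleGraph_degree_three_le (v := v.1)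
  have h2 := cycleGraph_degree_three_le (v := v.2)
  rw [degree_boxProd, h1, h2]

lemma Separated.closedNbhd_card {a b K : ℕ} {f : Fin K → Fin a × Fin b} (hf : Separated a b f)
    (ha : 3 ≤ a) (hb : 3 ≤ b) :
    ∃ S : Finset (Fin a × Fin b), S.card = K ∧
      (closedNbhd ((cycleGraph a).boxProd (cycleGraph b)) (S : Set _)).ncard = K * 5 := by
  classical
  have key : ∀ i j w, (w = f i ∨ ((cycleGraph a).boxProd (cycleGraph b)).Adj (f i) w) →
      (w = f j ∨ ((cycleGraph a).boxProd (cycleGraph b)).Adj (f j) w) → i = j := by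
    intro i j w h1 h2
    by_contra hij
    have h3 := hf i j hij
    have h1 := closedNbr_dist_le h1
    have h2 := closedNbr_dist_le h2
    have h4 := cycDist_triangle_left (f i).1.2 (f j).1.2 w.1.2
    have h5 := cycDist_triangle_left (f i).2.2 (f j).2.2 w.2.2
    omega
  have hinj : Function.Injective f := fun i j h => key i j (f i) (Or.inl rfl) (Or.inl h)
  have hcard : (Finset.univ.image f).card = K := by
    rw [Finset.card_image_of_injective _ hinj, Finset.card_univ, Fintype.card_fin]
  refine ⟨Finset.univ.image f, hcard, ?_⟩
  rw [card_closedNbhd_eq _ (fun v => torus_degree ha hb v), hcard]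
  intro p hp q hq w h1 h2
  simp only [Finset.mem_image, Finset.mem_univ, true_and] at hp hq
  obtain ⟨i, rfl⟩ := hp
  obtain ⟨j, rfl⟩ := hq
  rw [key i j w h1 h2]

/-- The vertices `(2i, 3j + s i)`, where the shift `s i` is `i mod 2`, except that the last row is
shifted by `2`, so that rows that are cyclically two apart always have different shifts. -/
lemma separated_grid {a b : ℕ} :
    ∃ f : Fin (a / 2) × Fin (b / 3) → Fin a × Fin b, Separated a b f := by
  have hs : ∀ i : ℕ, (if i + 1 = a / 2 then 2 else i % 2) < 3 := fun i => by split <;> omega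
  refine ⟨fun x => (⟨2 * x.1, by omega⟩,
    ⟨3 * x.2 + (if (x.1 : ℕ) + 1 = a / 2 then 2 else (x.1 : ℕ) % 2), ?_⟩), ?_⟩
  · have := hs x.1
    have := x.2.2
    omega
  · rintro ⟨⟨i, hi⟩, ⟨j, hj⟩⟩ ⟨⟨i', hi'⟩, ⟨j', hj'⟩⟩ hne
    have hne' : i ≠ i' ∨ j ≠ j' := by
      by_contra! h
      simp [h.1, h.2] at hne
    simp only [cycDist]
    clear hne hs
    by_cases hii : i = i'
    · subst hii
      have : j ≠ j' := by simpa using hne'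
      split <;> omega
    · split <;> split <;> omega

lemma Separated.swap {a b : ℕ} {ι : Type*} {f : ι → Fin a × Fin b} (hf : Separated a b f) :
    Separated b a (fun i => (f i).swap) := fun i j h => by
  have := hf i j h
  simp only [Prod.fst_swap, Prod.snd_swap]
  omega

lemma separated_of_le {a b r s K : ℕ} {f : Fin r × Fin s → Fin a × Fin b} (hf : Separated a b f)
    (hK : K ≤ r * s) : ∃ g : Fin K → Fin a × Fin b, Separated a b g :=
  ⟨fun k => f (finProdFinEquiv.symm (Fin.castLE hK k)), fun _ _ h => hf _ _ fun e =>
    h (Fin.castLE_injective hK (finProdFinEquiv.symm.injective e))⟩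

/-- One of the two grids has at least `mn / 10` vertices, unless `m = n = 5`. -/
lemma grid_large {m n : ℕ} (hm : 3 ≤ m) (hmn : m ≤ n) (h5 : ¬ (m = 5 ∧ n = 5)) :
    m * n ≤ 10 * ((m / 2) * (n / 3)) ∨ m * n ≤ 10 * ((n / 2) * (m / 3)) := by
  by_cases h8 : m < 8
  · interval_cases m <;> norm_num <;> omega
  · left
    have h1 : m ≤ 2 * (m / 2) + 1 := by omega
    have h2 : n ≤ 3 * (n / 3) + 2 := by omega
    have h3 : 4 ≤ m / 2 := by omega
    have h4 : 2 ≤ n / 3 := by omega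
    calc m * n ≤ (2 * (m / 2) + 1) * (3 * (n / 3) + 2) := Nat.mul_le_mul h1 h2
      _ ≤ _ := by nlinarith

lemma separated_ceil {m n : ℕ} (hm : 3 ≤ m) (hmn : m ≤ n) :
    ∃ f : Fin ⌈((m : ℚ) * n) / 10⌉₊ → Fin m × Fin n, Separated m n f := by
  by_cases h5 : m = 5 ∧ n = 5
  · obtain ⟨rfl, rfl⟩ := h5
    have : ⌈(((5 : ℕ) : ℚ) * (5 : ℕ)) / 10⌉₊ = 3 := by
      rw [Nat.ceil_eq_iff (by norm_num)]; norm_num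
    rw [this]
    -- three vertices of the perfect code `{(x, y) | y = 2x}`
    exact ⟨![(0, 0), (1, 2), (2, 4)], by unfold Separated cycDist; decide⟩
  · have key : ∀ K : ℕ, m * n ≤ 10 * K → ⌈((m : ℚ) * n) / 10⌉₊ ≤ K := fun K h => by
      rw [Nat.ceil_le, div_le_iff₀ (by norm_num), mul_comm (K : ℚ)]
      exact_mod_cast h
    rcases grid_large hm hmn h5 with h | h
    · obtain ⟨f, hf⟩ := separated_grid (a := m) (b := n)
      exact separated_of_le hf (key _ h)
    · obtain ⟨f, hf⟩ := separated_grid (a := n) (b := m)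
      exact separated_of_le hf.swap (key _ h)

/-- For the cylinder graph `C_m □ C_n` with `3 ≤ m ≤ n`,
`γ_{1/2}(C_m □ C_n) = ⌈mn/10⌉`. -/
theorem halfDom_cylinder (m n : ℕ) (hm : 3 ≤ m) (hmn : m ≤ n) :
    pDomNum ((cycleGraph m).boxProd (cycleGraph n)) (1/2)
      = ⌈((m : ℚ) * n) / 10⌉₊ := by
  classical
  have hn := hm.trans hmn
  refine IsLeast.csInf_eq ⟨?_, ?_⟩
  · obtain ⟨f, hf⟩ := separated_ceil hm hmn
    obtain ⟨S, hS, hc⟩ := hf.closedNbhd_card hm hn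
    refine ⟨S, ?_, by rw [Set.ncard_coe_finset, hS]⟩
    rw [IsPDomSet, hc]
    have := Nat.le_ceil (((m : ℚ) * n) / 10)
    simp only [Fintype.card_prod, Fintype.card_fin]
    push_cast
    linarith
  · rintro k ⟨S, hS, rfl⟩
    obtain ⟨S, rfl⟩ := S.toFinite.exists_finset_coe
    have h := card_closedNbhd_le _ (fun v => torus_degree hm hn v) S
    rw [IsPDomSet] at hS
    simp only [Fintype.card_prod, Fintype.card_fin] at hS
    rw [Set.ncard_coe_finset, Nat.ceil_le]
    have h' : (((closedNbhd ((cycleGraph m).boxProd (cycleGraph n)) (S : Set _)).ncard : ℕ) : ℚ)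
      ≤ ((S.card * (4 + 1) : ℕ) : ℚ) := by exact_mod_cast h
    push_cast at hS h'
    linarith
end

section
/- For any connected finite simple graph G, γ_{1/2}(G) ≤ ⌈γ(G)/2⌉. -/
/-!
Split a minimum dominating set `D` into two parts whose sizes are the two roundings of `|D| / 2`.
Their closed neighborhoods together cover all vertices, so one of the two contains at least half
of them, and either part has at most `⌈|D| / 2⌉` elements.
-/

open SimpleGraph

theorem closedNbhd_union {V : Type*} (G : SimpleGraph V) (S T : Set V) :
    closedNbhd G (S ∪ T) = closedNbhd G S ∪ closedNbhd G T := by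
  ext v
  simp only [closedNbhd, Set.mem_union, Set.mem_ofPred_eq, or_and_right, exists_or]
  exact or_or_or_comm

/-- For any connected graph `G`, `γ_{1/2}(G) ≤ ⌈γ(G)/2⌉`. -/
theorem halfDomNum_le_ceil_half_domNum {V : Type*} [Fintype V]
    (G : SimpleGraph V) (hG : G.Connected) :
    pDomNum G (1/2) ≤ ⌈(domNum G : ℚ) / 2⌉₊ := by
  -- Since `univ` is dominating, the infimum defining `domNum G` is attained.
  obtain ⟨D, hD, hDcard⟩ : ∃ S : Set V, IsDomSet G S ∧ S.ncard = domNum G :=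
    Nat.sInf_mem (s := {k | ∃ S : Set V, IsDomSet G S ∧ S.ncard = k})
      ⟨_, Set.univ, Set.eq_univ_of_forall fun _ => Or.inl trivial, rfl⟩
  rw [← hDcard]
  obtain ⟨A, hAD, hA⟩ := Set.exists_subset_card_eq (s := D) (n := D.ncard / 2) (by omega)
  have hB : (D \ A).ncard = D.ncard - D.ncard / 2 := by
    rw [Set.ncard_sdiff hAD, hA]
  have hceil : D.ncard - D.ncard / 2 ≤ ⌈(D.ncard : ℚ) / 2⌉₊ := by
    have h : (D.ncard : ℚ) ≤ ((2 * ⌈(D.ncard : ℚ) / 2⌉₊ : ℕ) : ℚ) := by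
      push_cast
      linarith [Nat.le_ceil ((D.ncard : ℚ) / 2)]
    have h' : D.ncard ≤ 2 * ⌈(D.ncard : ℚ) / 2⌉₊ := by exact_mod_cast h
    omega
  have hcover : closedNbhd G A ∪ closedNbhd G (D \ A) = Set.univ := by
    rw [← closedNbhd_union, Set.union_sdiff_cancel hAD]
    exact hD
  have hcard : Fintype.card V ≤ (closedNbhd G A).ncard + (closedNbhd G (D \ A)).ncard := by
    rw [← Nat.card_eq_fintype_card, ← Set.ncard_univ, ← hcover]
    exact Set.ncard_union_le _ _
  have key : ∀ S : Set V, Fintype.card V ≤ 2 * (closedNbhd G S).ncard →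
      pDomNum G (1/2) ≤ S.ncard := by
    intro S hS
    refine Nat.sInf_le ⟨S, ?_, rfl⟩
    have h : (Fintype.card V : ℚ) ≤ 2 * ((closedNbhd G S).ncard : ℚ) := by exact_mod_cast hS
    unfold IsPDomSet
    linarith
  rcases le_total (closedNbhd G A).ncard (closedNbhd G (D \ A)).ncard with h | h
  · have := key (D \ A) (by omega)
    omega
  · have := key A (by omega)
    omega
end

section
/- For any connected finite simple graph G and positive integers i ≤ j, the (i/j)-domination number satisfies γ_{i/j}(G) ≤ ⌈(i/j)·γ(G)⌉. -/
/-!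
Let `D` be a minimum dominating set. Choosing for each vertex a dominator in `D` partitions `V` into
`|D|` fibres. The `k = ⌈(i/j)·|D|⌉` largest fibres contain at least the fraction `k/|D| ≥ i/j` of all
vertices (`exists_heavy_subset`), and they lie in the closed neighborhood of the `k` corresponding
elements of `D`.
-/

open SimpleGraph

/-- Averaging: some `k`-element subset of `D` has average weight at least that of `D`. It is obtained
by repeatedly discarding an element of minimum weight. -/
lemma exists_heavy_subset {α : Type*} (w : α → ℕ) (D : Finset α) (k : ℕ) (hk : k ≤ D.card) :
    ∃ T ⊆ D, T.card = k ∧ k * ∑ d ∈ D, w d ≤ D.card * ∑ d ∈ T, w d := by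
  classical
  induction hn : D.card generalizing D with
  | zero => exact ⟨D, subset_rfl, by omega, by simp [show k = 0 by omega]⟩
  | succ n ih =>
    rcases hk.eq_or_lt with h | h
    · exact ⟨D, subset_rfl, h.symm, by rw [h, hn]⟩
    obtain ⟨x, hx, hmin⟩ := D.exists_min_image w (Finset.card_pos.mp (by omega))
    have hc : (D.erase x).card = n := by rw [Finset.card_erase_of_mem hx, hn]; rfl
    obtain ⟨T, hT, hTk, hle⟩ := ih (D.erase x) (by omega) hc
    refine ⟨T, hT.trans (D.erase_subset x), hTk, ?_⟩
    have hsum := Finset.add_sum_erase D w hx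
    have hx_le : n * w x ≤ ∑ d ∈ D.erase x, w d := by
      have := Finset.card_nsmul_le_sum (D.erase x) w (w x)
        fun d hd => hmin d (Finset.mem_of_mem_erase hd)
      rwa [hc, smul_eq_mul] at this
    rcases Nat.eq_zero_or_pos n with h0 | hpos
    · simp [show k = 0 by omega]
    · refine Nat.le_of_mul_le_mul_left ?_ hpos
      rw [← hsum]
      calc n * (k * (w x + ∑ d ∈ D.erase x, w d))
          = k * (n * w x) + n * (k * ∑ d ∈ D.erase x, w d) := by ring
        _ ≤ k * ∑ d ∈ D.erase x, w d + n * (k * ∑ d ∈ D.erase x, w d) := by gcongr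
        _ = (n + 1) * (k * ∑ d ∈ D.erase x, w d) := by ring
        _ ≤ (n + 1) * (n * ∑ d ∈ T, w d) := by gcongr
        _ = n * ((n + 1) * ∑ d ∈ T, w d) := by ring

/-- For any connected graph `G` and positive integers `i ≤ j`,
`γ_{i/j}(G) ≤ ⌈(i/j)·γ(G)⌉`. -/
theorem pDomNum_le_ceil_frac_domNum {V : Type*} [Fintype V]
    (G : SimpleGraph V) (hG : G.Connected) (i j : ℕ) (hi : 0 < i) (hij : i ≤ j) :
    pDomNum G ((i : ℚ) / j) ≤ ⌈((i : ℚ) / j) * (domNum G : ℚ)⌉₊ := by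
  classical
  have hV : Nonempty V := hG.nonempty
  have hj : (0 : ℚ) < j := by exact_mod_cast hi.trans_le hij
  -- The whole vertex set is dominating, so the infimum defining `domNum` is attained.
  obtain ⟨S, hS, hScard⟩ : domNum G ∈ {k | ∃ S : Set V, IsDomSet G S ∧ S.ncard = k} :=
    Nat.sInf_mem ⟨_, Set.univ, by ext v; simp [closedNbhd], rfl⟩
  set k := ⌈((i : ℚ) / j) * (domNum G : ℚ)⌉₊ with hkdef
  have hDcard : S.toFinset.card = domNum G := by rw [← hScard, Set.ncard_eq_toFinset_card']
  have hdom : ∀ v : V, ∃ d ∈ S, v = d ∨ G.Adj d v := by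
    intro v
    have hv : v ∈ closedNbhd G S := by rw [hS]; trivial
    rcases hv with h | ⟨u, hu, huv⟩
    · exact ⟨v, h, Or.inl rfl⟩
    · exact ⟨u, hu, Or.inr huv⟩
  choose f hfS hf using hdom
  have hk : k ≤ S.toFinset.card := by
    rw [hDcard, hkdef, Nat.ceil_le]
    have : (i : ℚ) / j ≤ 1 := by
      rw [div_le_one hj]
      exact_mod_cast hij
    exact mul_le_of_le_one_left (Nat.cast_nonneg _) this
  obtain ⟨T, -, hTk, hle⟩ := exists_heavy_subset
    (fun d => (Finset.univ.filter fun v => f v = d).card) S.toFinset k hk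
  have htotal : ∑ d ∈ S.toFinset, (Finset.univ.filter fun v => f v = d).card
      = Fintype.card V :=
    (Finset.card_eq_sum_card_fiberwise fun v _ => by simpa using hfS v).symm
  have hcover : ∑ d ∈ T, (Finset.univ.filter fun v => f v = d).card
      ≤ (closedNbhd G (T : Set V)).ncard := by
    rw [← Finset.card_biUnion, ← Set.ncard_coe_finset]
    · refine Set.ncard_le_ncard ?_ (Set.toFinite _)
      intro v hv
      have hfT : f v ∈ T := by simpa using hv
      rcases hf v with h | h
      · exact Or.inl (by rw [h]; exact hfT)
      · exact Or.inr ⟨f v, hfT, h⟩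
    · intro a _ b _ hab
      rw [Function.onFun, Finset.disjoint_left]
      intro v hva hvb
      simp only [Finset.mem_filter] at hva hvb
      exact hab (hva.2.symm.trans hvb.2)
  have hγ : 0 < domNum G := by
    rw [← hDcard, Finset.card_pos]
    exact ⟨f hV.some, by simpa using hfS hV.some⟩
  refine Nat.sInf_le ⟨(T : Set V), ?_, by rw [Set.ncard_coe_finset, hTk]⟩
  have hmain : k * Fintype.card V ≤ domNum G * (closedNbhd G (T : Set V)).ncard := by
    rw [htotal, hDcard] at hle
    exact hle.trans (Nat.mul_le_mul_left _ hcover)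
  have hγ' : (0 : ℚ) < domNum G := by exact_mod_cast hγ
  refine le_of_mul_le_mul_left ?_ hγ'
  calc (domNum G : ℚ) * ((i : ℚ) / j * Fintype.card V)
      = (i : ℚ) / j * domNum G * Fintype.card V := by ring
    _ ≤ k * Fintype.card V := by gcongr; exact Nat.le_ceil _
    _ ≤ domNum G * (closedNbhd G (T : Set V)).ncard := by exact_mod_cast hmain
end

section
/- Let G be a finite simple graph on n vertices such that both G and its complement Ḡ are connected, and let i ≤ j be positive integers. Then γ_{i/j}(G) + γ_{i/j}(Ḡ) ≤ ⌈(i/j)·(⌊n/2⌋ + 2)⌉ + 1. -/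
/-!
Write `γ = γ(G)` and `γ' = γ(Gᶜ)`.

* A minimum dominating set `D` splits `V` into `γ` cells, one per vertex of `D`, each cell lying
  in the closed neighborhood of its vertex. The `⌈p γ⌉` largest cells contain at least `p n`
  vertices, so `γ_p ≤ ⌈p γ⌉` (`pDomNum_le_ceil`). As `⌈a⌉ + ⌈b⌉ ≤ ⌈a + b⌉ + 1`, it suffices to
  prove `γ + γ' ≤ ⌊n/2⌋ + 2` (`domNum_add_domNum_compl_le`).
* If `γ ≤ 2` or `γ' ≤ 2`, this is Ore's bound `γ ≤ n/2` (`two_mul_domNum_le`).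
* Let `γ, γ' ≥ 3`. Fewer than `γ'` vertices never dominate `Gᶜ`, so they have a common
  `G`-neighbor; covering the non-neighbors of a vertex `v` in groups of size `γ' - 1` gives
  `(γ - 2)(γ' - 1) < deg_{Gᶜ} v` (`mul_lt_compl_degree`), and symmetrically
  `(γ' - 2)(γ - 1) < deg_G v`. Adding these bounds `n` from below, which is enough unless
  `γ = γ' = 3` and `n = 7`. In that case `G` would be `3`-regular on `7` vertices, contradicting
  the handshake lemma.
-/

open SimpleGraph

namespace NordhausGaddum

open Finset

/-- `S` dominates `G`, for a finset `S`. -/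
def Dominates {V : Type*} (G : SimpleGraph V) (S : Finset V) : Prop :=
  ∀ v, v ∈ S ∨ ∃ u ∈ S, G.Adj u v

variable {V : Type*} [Fintype V]

lemma domNum_le {G : SimpleGraph V} {S : Finset V} (h : Dominates G S) : domNum G ≤ #S := by
  refine Nat.sInf_le ⟨(S : Set V), ?_, Set.ncard_coe_finset S⟩
  ext v
  simpa [closedNbhd] using h v

lemma exists_dominates (G : SimpleGraph V) : ∃ S : Finset V, Dominates G S ∧ #S = domNum G := by
  classical
  have hne : {k | ∃ S : Set V, IsDomSet G S ∧ S.ncard = k}.Nonempty :=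
    ⟨_, Set.univ, by ext v; simp [closedNbhd], rfl⟩
  obtain ⟨S, hS, hc⟩ := Nat.sInf_mem hne
  refine ⟨S.toFinset, fun v => ?_, ?_⟩
  · have : v ∈ closedNbhd G S := by rw [hS]; trivial
    simpa [closedNbhd] using this
  · rw [← Set.ncard_eq_toFinset_card']
    exact hc

/-! ### From domination to proportional domination -/

/-- The `k` heaviest elements of `D` carry at least the fraction `k / #D` of the weight. -/
lemma exists_heavy_subset {α : Type*} (D : Finset α) (w : α → ℕ) (k : ℕ) (hk : k ≤ #D) :
    ∃ S ⊆ D, #S = k ∧ k * ∑ x ∈ D, w x ≤ #D * ∑ x ∈ S, w x := by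
  classical
  induction hk using Nat.decreasingInduction with
  | self => exact ⟨D, subset_rfl, rfl, le_rfl⟩
  | of_succ k hk ih =>
    obtain ⟨S, hSD, hSc, hS⟩ := ih
    have hne : S.Nonempty := card_pos.mp (by omega)
    obtain ⟨x, hx, hmin⟩ := exists_min_image S w hne
    refine ⟨S.erase x, (erase_subset _ _).trans hSD, by rw [card_erase_of_mem hx]; omega, ?_⟩
    have h1 : w x + ∑ y ∈ S.erase x, w y = ∑ y ∈ S, w y := add_sum_erase S w hx
    have h2 : k * w x ≤ ∑ y ∈ S.erase x, w y := by
      have := card_nsmul_le_sum (S.erase x) w (w x) (fun y hy => hmin y (mem_of_mem_erase hy))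
      rwa [card_erase_of_mem hx, hSc, smul_eq_mul, Nat.add_sub_cancel] at this
    rw [← h1] at hS
    refine Nat.le_of_mul_le_mul_left (c := k + 1) ?_ (Nat.succ_pos k)
    calc (k + 1) * (k * ∑ y ∈ D, w y) = k * ((k + 1) * ∑ y ∈ D, w y) := by ring
      _ ≤ k * (#D * (w x + ∑ y ∈ S.erase x, w y)) := Nat.mul_le_mul_left _ hS
      _ = #D * (k * w x) + #D * k * ∑ y ∈ S.erase x, w y := by ring
      _ ≤ #D * ∑ y ∈ S.erase x, w y + #D * k * ∑ y ∈ S.erase x, w y := by gcongr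
      _ = (k + 1) * (#D * ∑ y ∈ S.erase x, w y) := by ring

lemma pDomNum_le_ceil [Nonempty V] (G : SimpleGraph V) (p : ℚ) (hp1 : p ≤ 1) :
    pDomNum G p ≤ ⌈p * (domNum G : ℚ)⌉₊ := by
  classical
  obtain ⟨D, hD, hDc⟩ := exists_dominates G
  have hf : ∀ v, ∃ u ∈ D, u = v ∨ G.Adj u v := fun v => by
    rcases hD v with h | ⟨u, hu, h⟩
    · exact ⟨v, h, Or.inl rfl⟩
    · exact ⟨u, hu, Or.inr h⟩
  choose f hfD hf using hf
  have hpos : 0 < #D := card_pos.mpr ⟨f (Classical.arbitrary V), hfD _⟩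
  rw [← hDc]
  set k := ⌈p * (#D : ℚ)⌉₊ with hk
  have hkD : k ≤ #D := by
    refine Nat.ceil_le.mpr ?_
    exact mul_le_of_le_one_left (Nat.cast_nonneg _) hp1
  obtain ⟨S, hSD, hSc, hS⟩ := exists_heavy_subset D (fun u => #{v | f v = u}) k hkD
  have hsumD : ∑ u ∈ D, #{v | f v = u} = Fintype.card V :=
    (card_eq_sum_card_fiberwise (fun v _ => hfD v)).symm
  have hsumS : ∑ u ∈ S, #{v | f v = u} = #{v | f v ∈ S} := by
    rw [card_eq_sum_card_fiberwise (f := f) (t := S) (by intro v hv; simpa using hv)]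
    refine sum_congr rfl fun u hu => ?_
    congr 1
    ext v
    simp only [mem_filter, mem_univ, true_and]
    exact ⟨fun h => ⟨h ▸ hu, h⟩, fun h => h.2⟩
  have hle : #{v | f v ∈ S} ≤ (closedNbhd G (S : Set V)).ncard := by
    rw [← Set.ncard_coe_finset]
    refine Set.ncard_le_ncard (fun v hv => ?_) (Set.toFinite _)
    have hv' : f v ∈ S := by simpa using hv
    rcases hf v with h | h
    · exact Or.inl (by simpa [h] using hv')
    · exact Or.inr ⟨f v, hv', h⟩
  refine Nat.sInf_le ⟨(S : Set V), ?_, by rw [Set.ncard_coe_finset, hSc]⟩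
  rw [hsumD, hsumS] at hS
  have h3 : (k : ℚ) * Fintype.card V ≤ #D * ((closedNbhd G (S : Set V)).ncard : ℚ) := by
    exact_mod_cast hS.trans (Nat.mul_le_mul_left _ hle)
  have h4 : p * (#D : ℚ) ≤ k := Nat.le_ceil _
  have hposQ : (0 : ℚ) < #D := by exact_mod_cast hpos
  unfold IsPDomSet
  refine le_of_mul_le_mul_left ?_ hposQ
  calc (#D : ℚ) * (p * Fintype.card V) = p * #D * Fintype.card V := by ring
    _ ≤ k * Fintype.card V := by gcongr
    _ ≤ _ := h3

/-! ### Bounds on the domination number -/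

/-- Ore's bound: without isolated vertices, the complement of a minimum dominating set is again
dominating. -/
lemma two_mul_domNum_le (G : SimpleGraph V) (h : ∀ v, ∃ u, G.Adj v u) :
    2 * domNum G ≤ Fintype.card V := by
  classical
  obtain ⟨D, hD, hDc⟩ := exists_dominates G
  have hcompl : Dominates G Dᶜ := by
    intro v
    by_contra! hv
    obtain ⟨hvD, hnb⟩ := hv
    have hvD : v ∈ D := by simpa using hvD
    have hnb : ∀ u, G.Adj u v → u ∈ D := fun u hu => by
      by_contra hu'
      exact hnb u (by simpa using hu') hu
    -- All neighbors of `v` are in `D`, so `v` is redundant in `D`.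
    have : Dominates G (D.erase v) := by
      intro x
      by_cases hxv : x = v
      · obtain ⟨u, hu⟩ := h v
        exact Or.inr ⟨u, mem_erase.mpr ⟨hu.ne', hnb u hu.symm⟩, hxv ▸ hu.symm⟩
      · rcases hD x with hx | ⟨u, hu, hux⟩
        · exact Or.inl (mem_erase.mpr ⟨hxv, hx⟩)
        · by_cases huv : u = v
          · subst huv
            exact Or.inl (mem_erase.mpr ⟨hxv, hnb x hux.symm⟩)
          · exact Or.inr ⟨u, mem_erase.mpr ⟨huv, hu⟩, hux⟩
    have h1 := domNum_le this
    rw [card_erase_of_mem hvD] at h1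
    have : 0 < #D := card_pos.mpr ⟨v, hvD⟩
    omega
  have h1 := domNum_le hcompl
  have h2 := card_add_card_compl D
  omega

/-- Any `γ(Gᶜ) - 1` vertices have a common neighbor in `G`, so `m` vertices suffice to dominate
`m * (γ(Gᶜ) - 1)` vertices. -/
lemma exists_cover (G : SimpleGraph V) (m : ℕ) :
    ∀ T : Finset V, #T ≤ m * (domNum Gᶜ - 1) → 0 < domNum Gᶜ →
      ∃ S : Finset V, #S ≤ m ∧ ∀ v ∈ T, ∃ u ∈ S, G.Adj u v := by
  classical
  induction m with
  | zero =>
    intro T hT _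
    have : T = ∅ := by simpa using hT
    exact ⟨∅, by simp, by simp [this]⟩
  | succ m ih =>
    intro T hT hpos
    rw [Nat.succ_mul] at hT
    obtain ⟨A, hAT, hA⟩ := exists_subset_card_eq (min_le_left (#T) (domNum Gᶜ - 1))
    obtain ⟨S, hS, hcov⟩ := ih (T \ A) (by rw [card_sdiff_of_subset hAT]; omega) hpos
    have hnd : ¬ Dominates Gᶜ A := fun hd => by
      have := domNum_le hd
      omega
    obtain ⟨w, hw⟩ := not_forall.mp hnd
    push Not at hw
    refine ⟨insert w S, (card_insert_le _ _).trans (by omega), fun v hv => ?_⟩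
    by_cases hvA : v ∈ A
    · refine ⟨w, mem_insert_self _ _, ?_⟩
      have hne : v ≠ w := fun h => hw.1 (h ▸ hvA)
      have := hw.2 v hvA
      rw [SimpleGraph.compl_adj] at this
      by_contra hadj
      exact this ⟨hne, fun h => hadj h.symm⟩
    · obtain ⟨u, hu, huv⟩ := hcov v (mem_sdiff.mpr ⟨hv, hvA⟩)
      exact ⟨u, mem_insert_of_mem hu, huv⟩

open Classical in
/-- Otherwise `v` together with `γ(G) - 2` further vertices would dominate `G`. -/
lemma mul_lt_compl_degree (G : SimpleGraph V) (hg : 2 ≤ domNum G) (hk : 0 < domNum Gᶜ) (v : V) :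
    (domNum G - 2) * (domNum Gᶜ - 1) < Gᶜ.degree v := by
  by_contra! hlt
  rw [← SimpleGraph.card_neighborFinset_eq_degree] at hlt
  obtain ⟨S, hS, hcov⟩ := exists_cover G _ _ hlt hk
  have hd : Dominates G (insert v S) := by
    intro x
    by_cases hxv : x = v
    · exact Or.inl (hxv ▸ mem_insert_self _ _)
    by_cases hadj : G.Adj v x
    · exact Or.inr ⟨v, mem_insert_self _ _, hadj⟩
    · obtain ⟨u, hu, hux⟩ := hcov x (by
        rw [SimpleGraph.mem_neighborFinset, SimpleGraph.compl_adj]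
        exact ⟨fun h => hxv h.symm, hadj⟩)
      exact Or.inr ⟨u, mem_insert_of_mem hu, hux⟩
  have h1 := domNum_le hd
  have h2 := card_insert_le v S
  omega

lemma domNum_add_domNum_compl_le (G : SimpleGraph V) (hG : G.Connected) (hGc : Gᶜ.Connected) :
    domNum G + domNum Gᶜ ≤ Fintype.card V / 2 + 2 := by
  classical
  have := hG.nonempty
  have hle : ∀ H : SimpleGraph V, domNum H ≤ Fintype.card V := fun H =>
    domNum_le (S := univ) fun v => Or.inl (mem_univ v)
  rcases subsingleton_or_nontrivial V with hsub | hnt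
  · have h1 := Fintype.card_le_one_iff_subsingleton.mpr hsub
    have h2 := hle G
    have h3 := hle Gᶜ
    omega
  have hoG := two_mul_domNum_le G fun v => hG.preconnected.exists_adj_of_nontrivial v
  have hoGc := two_mul_domNum_le Gᶜ fun v => hGc.preconnected.exists_adj_of_nontrivial v
  by_cases hg : domNum G ≤ 2
  · omega
  by_cases hk : domNum Gᶜ ≤ 2
  · omega
  have hdeg : ∀ v, (domNum G - 2) * (domNum Gᶜ - 1) < Gᶜ.degree v ∧
      (domNum Gᶜ - 2) * (domNum G - 1) < G.degree v ∧
      Gᶜ.degree v + G.degree v + 1 = Fintype.card V := by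
    intro v
    refine ⟨?_, ?_, ?_⟩
    · convert mul_lt_compl_degree G (by omega) (by omega) v
    · have := mul_lt_compl_degree Gᶜ (by omega) (by rw [compl_compl]; omega) v
      simp only [compl_compl] at this
      convert this
      exact (compl_compl G).symm
    · have h1 := G.degree_compl v
      have h2 := G.degree_lt_card_verts v
      omega
  obtain ⟨a, ha⟩ : ∃ a, domNum G = a + 3 := ⟨domNum G - 3, by omega⟩
  obtain ⟨b, hb⟩ : ∃ b, domNum Gᶜ = b + 3 := ⟨domNum Gᶜ - 3, by omega⟩
  rw [ha, hb] at hdeg ⊢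
  simp only [show a + 3 - 2 = a + 1 by omega, show a + 3 - 1 = a + 2 by omega,
    show b + 3 - 2 = b + 1 by omega, show b + 3 - 1 = b + 2 by omega] at hdeg
  by_contra! hcon
  obtain ⟨v₀⟩ := hG.nonempty
  have hab : a = 0 ∧ b = 0 := by
    obtain ⟨h1, h2, h3⟩ := hdeg v₀
    ring_nf at h1 h2
    have := Nat.zero_le (a * b)
    omega
  obtain ⟨rfl, rfl⟩ := hab
  have hcard : Fintype.card V = 7 := by
    have := hdeg v₀
    omega
  -- Now `G` is `3`-regular on `7` vertices.
  have hsum := G.sum_degrees_eq_twice_card_edges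
  rw [sum_congr rfl (fun v _ => show G.degree v = 3 by have := hdeg v; omega), sum_const,
    card_univ, hcard, smul_eq_mul] at hsum
  omega

end NordhausGaddum

/-- Nordhaus–Gaddum type bound: if `G` and its complement are connected and
`i ≤ j` are positive integers, then
`γ_{i/j}(G) + γ_{i/j}(Ḡ) ≤ ⌈(i/j)·(⌊n/2⌋ + 2)⌉ + 1`. -/
theorem pDomNum_nordhaus_gaddum {V : Type*} [Fintype V] (G : SimpleGraph V)
    (hG : G.Connected) (hGc : Gᶜ.Connected) (i j : ℕ) (hi : 0 < i) (hij : i ≤ j) :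
    pDomNum G ((i : ℚ) / j) + pDomNum Gᶜ ((i : ℚ) / j)
      ≤ ⌈((i : ℚ) / j) * (((Fintype.card V / 2 : ℕ) : ℚ) + 2)⌉₊ + 1 := by
  have := hG.nonempty
  have hp0 : (0 : ℚ) ≤ (i : ℚ) / j := by positivity
  have hp1 : (i : ℚ) / j ≤ 1 := div_le_one_of_le₀ (by exact_mod_cast hij) (Nat.cast_nonneg _)
  set p : ℚ := (i : ℚ) / j
  have h1 := NordhausGaddum.pDomNum_le_ceil G p hp1
  have h2 := NordhausGaddum.pDomNum_le_ceil Gᶜ p hp1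
  have h3 : (domNum G : ℚ) + domNum Gᶜ ≤ ((Fintype.card V / 2 : ℕ) : ℚ) + 2 := by
    exact_mod_cast NordhausGaddum.domNum_add_domNum_compl_le G hG hGc
  have h4 : p * domNum G + p * domNum Gᶜ ≤ p * (((Fintype.card V / 2 : ℕ) : ℚ) + 2) := by
    rw [← mul_add]
    exact mul_le_mul_of_nonneg_left h3 hp0
  have h5 := Nat.ceil_lt_add_one (mul_nonneg hp0 (Nat.cast_nonneg (α := ℚ) (domNum G)))
  have h6 := Nat.ceil_lt_add_one (mul_nonneg hp0 (Nat.cast_nonneg (α := ℚ) (domNum Gᶜ)))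
  have h7 := Nat.le_ceil (p * (((Fintype.card V / 2 : ℕ) : ℚ) + 2))
  have h8 : ⌈p * (domNum G : ℚ)⌉₊ + ⌈p * (domNum Gᶜ : ℚ)⌉₊
      < ⌈p * (((Fintype.card V / 2 : ℕ) : ℚ) + 2)⌉₊ + 2 := by
    have : (⌈p * (domNum G : ℚ)⌉₊ : ℚ) + ⌈p * (domNum Gᶜ : ℚ)⌉₊
        < ⌈p * (((Fintype.card V / 2 : ℕ) : ℚ) + 2)⌉₊ + 2 := by linarith
    exact_mod_cast this
  omega
end

section
/- Let G be a finite simple graph on n vertices such that both G and its complement Ḡ are connected. Then γ_{1/2}(G) + γ_{1/2}(Ḡ) ≤ ⌈(1/2)·⌊n/2⌋⌉ + 2. -/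
/-!
For any vertex `v`, every vertex lies in `N[v]` taken in `G` or in `Ḡ`, so one of these two closed
neighborhoods has at least half of the vertices: one of the two half-domination numbers is at
most `1` (`halfDomNum_le_one_or`).

The other one is at most `k` whenever `n ≤ 4k` (`halfDomNum_le_of_card_le`), by a greedy argument.
Suppose `|N[S]| < n/2`, and choose a neighbor `f v` of every vertex `v`. If some `f v` with `v`
undominated is itself undominated, adding `v` to `S` dominates two new vertices. If `f v = f v'` for
distinct undominated `v, v'`, adding this common neighbor does. One of the two must occur:
otherwise `f` injects the undominated vertices, more than half of all, into `N[S]`.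
Taking `k = ⌈⌊n/2⌋/2⌉ + 1` gives the theorem.
-/

open SimpleGraph

theorem closedNbhd_insert_superset {V : Type*} (G : SimpleGraph V) (S : Set V) (w : V) :
    closedNbhd G S ∪ closedNbhd G {w} ⊆ closedNbhd G (insert w S) := by
  rintro x ((h | ⟨u, hu, h⟩) | (h | ⟨u, hu, h⟩))
  · exact Or.inl (Or.inr h)
  · exact Or.inr ⟨u, Or.inr hu, h⟩
  · exact Or.inl (Or.inl h)
  · exact Or.inr ⟨u, Or.inl hu, h⟩

theorem halfDomNum_le {V : Type*} [Fintype V] (G : SimpleGraph V) (S : Set V) (k : ℕ)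
    (hS : Fintype.card V ≤ 2 * (closedNbhd G S).ncard) (hk : S.ncard ≤ k) :
    pDomNum G (1/2) ≤ k := by
  have h : (Fintype.card V : ℚ) ≤ 2 * ((closedNbhd G S).ncard : ℚ) := by exact_mod_cast hS
  have hdom : IsPDomSet G (1/2) S := by
    unfold IsPDomSet
    linarith
  have hle : pDomNum G (1/2) ≤ S.ncard := Nat.sInf_le ⟨S, hdom, rfl⟩
  exact hle.trans hk

theorem halfDomNum_le_one_or {V : Type*} [Fintype V] (G : SimpleGraph V) (v : V) :
    pDomNum G (1/2) ≤ 1 ∨ pDomNum Gᶜ (1/2) ≤ 1 := by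
  have hU : closedNbhd G {v} ∪ closedNbhd Gᶜ {v} = Set.univ := by
    ext x
    by_cases hx : x = v
    · simp [closedNbhd, hx]
    · by_cases h : G.Adj v x <;> simp [closedNbhd, h, hx, Ne.symm hx]
  have hc := Set.ncard_union_le (closedNbhd G {v}) (closedNbhd Gᶜ {v})
  rw [hU, Set.ncard_univ, Nat.card_eq_fintype_card] at hc
  by_cases h : Fintype.card V ≤ 2 * (closedNbhd G {v}).ncard
  · exact Or.inl (halfDomNum_le G {v} 1 h (by simp))
  · exact Or.inr (halfDomNum_le Gᶜ {v} 1 (by omega) (by simp))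

theorem ncard_closedNbhd_insert {V : Type*} [Fintype V] (G : SimpleGraph V) (S : Set V)
    (w a b : V) (hab : a ≠ b) (ha : a ∉ closedNbhd G S) (hb : b ∉ closedNbhd G S)
    (haw : a ∈ closedNbhd G {w}) (hbw : b ∈ closedNbhd G {w}) :
    (closedNbhd G S).ncard + 2 ≤ (closedNbhd G (insert w S)).ncard := by
  have hd : Disjoint (closedNbhd G S) {a, b} := by
    rw [Set.disjoint_right]
    rintro x (rfl | rfl) <;> assumption
  rw [← Set.ncard_pair hab, ← Set.ncard_union_eq hd (Set.toFinite _) (Set.toFinite _)]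
  refine Set.ncard_le_ncard (subset_trans ?_ (closedNbhd_insert_superset G S w)) (Set.toFinite _)
  refine Set.union_subset_union_right _ ?_
  rintro x (rfl | rfl) <;> assumption

/-- The greedy step: a set dominating less than half of a graph without isolated vertices can be
extended by one vertex so as to dominate at least two more vertices. -/
theorem exists_greedy_vertex {V : Type*} [Fintype V] (G : SimpleGraph V)
    (hG : ∀ v, ∃ u, G.Adj v u) (S : Set V)
    (hS : 2 * (closedNbhd G S).ncard < Fintype.card V) :
    ∃ w, (closedNbhd G S).ncard + 2 ≤ (closedNbhd G (insert w S)).ncard := by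
  choose f hf using hG
  by_contra! hno
  have hmaps : ∀ v ∈ (closedNbhd G S)ᶜ, f v ∈ closedNbhd G S := by
    intro v hv
    by_contra hfv
    exact (hno v).not_ge (ncard_closedNbhd_insert G S v v (f v) (hf v).ne hv hfv
      (Or.inl rfl) (Or.inr ⟨v, rfl, hf v⟩))
  have hinj : Set.InjOn f (closedNbhd G S)ᶜ := by
    intro v hv v' hv' h
    by_contra hne
    exact (hno (f v)).not_ge (ncard_closedNbhd_insert G S (f v) v v' hne hv hv'
      (Or.inr ⟨f v, rfl, (hf v).symm⟩) (Or.inr ⟨f v, rfl, h ▸ (hf v').symm⟩))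
  have hle := Set.ncard_le_ncard_of_injOn f hmaps hinj (Set.toFinite _)
  have hadd := Set.ncard_add_ncard_compl (closedNbhd G S)
  rw [Nat.card_eq_fintype_card] at hadd
  omega

theorem exists_greedy_set {V : Type*} [Fintype V] (G : SimpleGraph V)
    (hG : ∀ v, ∃ u, G.Adj v u) (k : ℕ) :
    ∃ S : Set V, S.ncard ≤ k ∧
      (2 * k ≤ (closedNbhd G S).ncard ∨ Fintype.card V ≤ 2 * (closedNbhd G S).ncard) := by
  induction k with
  | zero => exact ⟨∅, by simp, Or.inl (by simp)⟩
  | succ k ih =>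
    obtain ⟨S, hk, hS⟩ := ih
    by_cases h : Fintype.card V ≤ 2 * (closedNbhd G S).ncard
    · exact ⟨S, by omega, Or.inr h⟩
    · obtain ⟨w, hw⟩ := exists_greedy_vertex G hG S (by omega)
      exact ⟨insert w S, (Set.ncard_insert_le w S).trans (by omega), Or.inl (by omega)⟩

theorem halfDomNum_le_of_card_le {V : Type*} [Fintype V] (G : SimpleGraph V)
    (hG : G.Connected) (k : ℕ) (hk : Fintype.card V ≤ 4 * k) : pDomNum G (1/2) ≤ k := by
  rcases subsingleton_or_nontrivial V with hV | hV
  · -- The single vertex is isolated, so the greedy argument does not apply.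
    obtain ⟨v⟩ := hG.nonempty
    have h1 : Fintype.card V = 1 := Fintype.card_eq_one_iff.2 ⟨v, fun x => Subsingleton.elim x v⟩
    have hv : 0 < (closedNbhd G {v}).ncard :=
      (Set.ncard_pos (Set.toFinite _)).2 ⟨v, Or.inl rfl⟩
    exact halfDomNum_le G {v} k (by omega) (by rw [Set.ncard_singleton]; omega)
  · obtain ⟨S, hSk, hS⟩ := exists_greedy_set G hG.preconnected.exists_adj_of_nontrivial k
    exact halfDomNum_le G S k (by omega) hSk

/-- If `G` and its complement are connected, then
`γ_{1/2}(G) + γ_{1/2}(Ḡ) ≤ ⌈(1/2)·⌊n/2⌋⌉ + 2`. -/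
theorem halfDomNum_nordhaus_gaddum {V : Type*} [Fintype V] (G : SimpleGraph V)
    (hG : G.Connected) (hGc : Gᶜ.Connected) :
    pDomNum G (1/2) + pDomNum Gᶜ (1/2)
      ≤ ⌈(1/2 : ℚ) * ((Fintype.card V / 2 : ℕ) : ℚ)⌉₊ + 2 := by
  obtain ⟨v⟩ := hG.nonempty
  set m := ⌈(1/2 : ℚ) * ((Fintype.card V / 2 : ℕ) : ℚ)⌉₊ with hm
  have hmk : Fintype.card V ≤ 4 * (m + 1) := by
    have h : (1/2 : ℚ) * ((Fintype.card V / 2 : ℕ) : ℚ) ≤ m := Nat.le_ceil _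
    have h2 : ((Fintype.card V / 2 : ℕ) : ℚ) ≤ ((2 * m : ℕ) : ℚ) := by
      push_cast at h ⊢
      linarith
    have h3 : Fintype.card V / 2 ≤ 2 * m := by exact_mod_cast h2
    omega
  have h1 := halfDomNum_le_of_card_le G hG (m + 1) hmk
  have h2 := halfDomNum_le_of_card_le Gᶜ hGc (m + 1) hmk
  rcases halfDomNum_le_one_or G v with h | h <;> omega
end

section
/- For every cycle C_n (n ≥ 3), there exists a minimum 1/2-dominating set S and an edge e of C_n not incident to any vertex of S; consequently deleting e yields the path P_n with γ_{1/2}(P_n) ≤ γ_{1/2}(C_n). -/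
/-!
In a cycle every vertex has two neighbours, so `|N[S]| ≤ 3|S|` and a `1/2`-dominating set has at
least `k = ⌈n/6⌉` vertices (`cycle_halfDom_ncard_ge`). Since `n ≥ 3` gives `3k ≤ n`, the `k`
vertices `1, 4, …, 3k - 2` exist, and already in the path they dominate all of `0, …, 3k - 1`,
which is at least half of the vertices (`path_spacedSet_halfDom`). Hence this set is
minimum in the cycle and `1/2`-dominating in the path, and it avoids both ends `0` and `n - 1`
of the edge that closes the path into the cycle.
-/

open SimpleGraph

/-- The vertices `1, 4, …, 3k - 2` among `0, …, n - 1`. -/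
def spacedSet (n k : ℕ) (hk : 3 * k ≤ n) : Set (Fin n) :=
  Set.range fun j : Fin k => (⟨3 * j.val + 1, by omega⟩ : Fin n)

lemma ncard_spacedSet_le (n k : ℕ) (hk : 3 * k ≤ n) : (spacedSet n k hk).ncard ≤ k := by
  unfold spacedSet
  rw [← Set.image_univ]
  refine (Set.ncard_image_le Set.finite_univ).trans ?_
  simp [Set.ncard_univ]

lemma path_spacedSet_halfDom (n k : ℕ) (hk : 3 * k ≤ n) (hn : n ≤ 6 * k) :
    IsPDomSet (pathGraph n) (1/2) (spacedSet n k hk) := by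
  have hsub : Set.range (Fin.castLE hk) ⊆ closedNbhd (pathGraph n) (spacedSet n k hk) := by
    rintro _ ⟨i, rfl⟩
    -- Vertex `i` is within distance one of the centre `3 * (i / 3) + 1` of its block of three.
    have hi := i.isLt
    have hmem : (⟨3 * (i.val / 3) + 1, by omega⟩ : Fin n) ∈ spacedSet n k hk :=
      ⟨⟨i.val / 3, by omega⟩, rfl⟩
    by_cases h : i.val % 3 = 1
    · left
      convert hmem using 1
      ext
      simp only [Fin.val_castLE]
      omega
    · right
      refine ⟨_, hmem, ?_⟩
      rw [pathGraph_adj]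
      simp only [Fin.val_castLE]
      omega
  have hcard : 3 * k ≤ (closedNbhd (pathGraph n) (spacedSet n k hk)).ncard := by
    calc 3 * k = (Set.range (Fin.castLE hk)).ncard := by
          rw [← Set.image_univ, Set.ncard_image_of_injective _ (Fin.castLE_injective hk)]
          simp [Set.ncard_univ]
      _ ≤ _ := Set.ncard_le_ncard hsub (Set.toFinite _)
  have h1 : (3 * k : ℚ) ≤ ((closedNbhd (pathGraph n) (spacedSet n k hk)).ncard : ℚ) := by
    exact_mod_cast hcard
  have h2 : (n : ℚ) ≤ 6 * k := by exact_mod_cast hn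
  unfold IsPDomSet
  rw [Fintype.card_fin]
  linarith

lemma cycle_halfDom_ncard_ge (n : ℕ) (hn : 3 ≤ n) (S : Set (Fin n))
    (hS : IsPDomSet (cycleGraph n) (1/2) S) : n ≤ 6 * S.ncard := by
  obtain ⟨m, rfl⟩ : ∃ m, n = m + 2 := ⟨n - 2, by omega⟩
  have hsub : closedNbhd (cycleGraph (m + 2)) S ⊆
      S ∪ ((fun v => v + 1) '' S ∪ (fun v => v - 1) '' S) := by
    rintro v (hv | ⟨u, hu, huv⟩)
    · exact Or.inl hv
    · right
      rw [cycleGraph_adj] at huv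
      rcases huv with h | h
      · exact Or.inr ⟨u, hu, by simp [← h]⟩
      · exact Or.inl ⟨u, hu, by simp [← h]⟩
  have h1 := Set.ncard_le_ncard hsub (Set.toFinite _)
  have h2 := Set.ncard_union_le S ((fun v => v + 1) '' S ∪ (fun v => v - 1) '' S)
  have h3 := Set.ncard_union_le ((fun v => v + 1) '' S) ((fun v => v - 1) '' S)
  have h4 := Set.ncard_image_le (f := fun v => v + 1) (Set.toFinite S)
  have h5 := Set.ncard_image_le (f := fun v => v - 1) (Set.toFinite S)
  have h6 : (closedNbhd (cycleGraph (m + 2)) S).ncard ≤ 3 * S.ncard := by omega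
  unfold IsPDomSet at hS
  rw [Fintype.card_fin] at hS
  have h7 : ((closedNbhd (cycleGraph (m + 2)) S).ncard : ℚ) ≤ 3 * S.ncard := by exact_mod_cast h6
  have h8 : ((m + 2 : ℕ) : ℚ) ≤ 6 * S.ncard := by linarith
  exact_mod_cast h8

lemma IsPDomSet.mono {V : Type*} [Fintype V] {G H : SimpleGraph V} (h : G ≤ H) {p : ℚ}
    {S : Set V} (hS : IsPDomSet G p S) : IsPDomSet H p S := by
  have hsub : closedNbhd G S ⊆ closedNbhd H S := by
    rintro v (hv | ⟨u, hu, huv⟩)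
    · exact Or.inl hv
    · exact Or.inr ⟨u, hu, h huv⟩
  have h1 := Set.ncard_le_ncard hsub (Set.toFinite _)
  exact le_trans hS (by exact_mod_cast h1)

/-- For every cycle `C_n` (`n ≥ 3`), there is a minimum `1/2`-dominating set
`S` and an edge of `C_n` not incident to any vertex of `S`; consequently
`γ_{1/2}(P_n) ≤ γ_{1/2}(C_n)`. -/
theorem cycle_min_halfDom_misses_edge (n : ℕ) (hn : 3 ≤ n) :
    (∃ S : Set (Fin n), IsPDomSet (cycleGraph n) (1/2) S ∧
      S.ncard = pDomNum (cycleGraph n) (1/2) ∧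
      ∃ e ∈ (cycleGraph n).edgeSet, ∀ v ∈ S, v ∉ e) ∧
    pDomNum (pathGraph n) (1/2) ≤ pDomNum (cycleGraph n) (1/2) := by
  obtain ⟨k, hk, hnk, hmin⟩ : ∃ k, 3 * k ≤ n ∧ n ≤ 6 * k ∧ ∀ s, n ≤ 6 * s → k ≤ s :=
    ⟨(n + 5) / 6, by omega, by omega, fun s _ => by omega⟩
  have hpath := path_spacedSet_halfDom n k hk hnk
  have hcyc : IsPDomSet (cycleGraph n) (1/2) (spacedSet n k hk) :=
    hpath.mono pathGraph_le_cycleGraph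
  have hle := ncard_spacedSet_le n k hk
  have hlow : k ≤ pDomNum (cycleGraph n) (1/2) := by
    refine le_csInf ⟨_, _, hcyc, rfl⟩ ?_
    rintro _ ⟨T, hT, rfl⟩
    exact hmin _ (cycle_halfDom_ncard_ge n hn T hT)
  have hup : pDomNum (cycleGraph n) (1/2) ≤ (spacedSet n k hk).ncard :=
    Nat.sInf_le ⟨_, hcyc, rfl⟩
  refine ⟨⟨spacedSet n k hk, hcyc, by omega, s(⟨0, by omega⟩, ⟨n - 1, by omega⟩), ?_, ?_⟩, ?_⟩
  · rw [mem_edgeSet, cycleGraph_adj']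
    left
    rw [Fin.sub_def]
    simp only
    rw [show n - (n - 1) + 0 = 1 by omega, Nat.mod_eq_of_lt (by omega)]
  · rintro _ ⟨j, rfl⟩ h
    have hj := j.isLt
    simp only [Sym2.mem_iff, Fin.mk.injEq] at h
    omega
  · exact (Nat.sInf_le ⟨_, hpath, rfl⟩ : pDomNum (pathGraph n) (1/2) ≤ _).trans (hle.trans hlow)
end
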